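/- Under the multi-layer network assumptions, for each fixed ℓ ∈ {1,…,L}, define Φ_ℓ ∈ ℝ^{n×n} by Φ_ℓ = E_{w~N(0,Id)}[σ(wᵀX_{ℓ−1})ᵀ σ(wᵀX_{ℓ−1})] (the expectation conditional on X_{ℓ−1}) and Φ̃_ℓ = b_σ² X_{ℓ−1}ᵀX_{ℓ−1} + (1 − b_σ²) Id. Then almost surely as n → ∞, (1/n)‖Φ_ℓ − Φ̃_ℓ‖_F² → 0, where ‖·‖_F is the Frobenius norm. -/

import Mathlib

/-!
Lemma (approximation of the second-moment matrix): under the multi-layer network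
assumptions, `(1/n)‖Φ_ℓ − (b_σ² X_{ℓ−1}ᵀX_{ℓ−1} + (1−b_σ²)Id)‖_F² → 0` almost surely.
-/

open MeasureTheory ProbabilityTheory Filter Topology Matrix

noncomputable abbrev stdGaussian : Measure ℝ := gaussianReal 0 1

noncomputable abbrev gaussianVec (d : ℕ) : Measure (Fin d → ℝ) :=
  Measure.pi fun _ => stdGaussian

noncomputable abbrev gaussianMat (a b : ℕ) : Measure (Fin a → Fin b → ℝ) :=
  Measure.pi fun _ => gaussianVec b

/-- ℓ₂→ℓ₂ operator norm of a real matrix. -/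
noncomputable def opNorm {m n : ℕ} (X : Matrix (Fin m) (Fin n) ℝ) : ℝ :=
  ‖LinearMap.toContinuousLinearMap (Matrix.toEuclideanLin X)‖

/-- `(ε,B)`-orthonormality of the columns of a matrix. -/
def IsOrthonormal {d n : ℕ} (ε B : ℝ) (X : Matrix (Fin d) (Fin n) ℝ) : Prop :=
  (∀ α : Fin n, |(∑ i, X i α ^ 2) - 1| ≤ ε) ∧
  (∀ α β : Fin n, α ≠ β → |∑ i, X i α * X i β| ≤ ε) ∧
  opNorm X ≤ B ∧
  ∑ α : Fin n, ((∑ i, X i α ^ 2) - 1) ^ 2 ≤ B ^ 2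

open Classical in
/-- Integral of `f` against the empirical eigenvalue distribution of a symmetric matrix. -/
noncomputable def esd {n : ℕ} (M : Matrix (Fin n) (Fin n) ℝ) (f : ℝ → ℝ) : ℝ :=
  if h : M.IsHermitian then (n : ℝ)⁻¹ * ∑ α, f (h.eigenvalues α) else 0

/-- The layers `X_ℓ = σ(W_ℓ X_{ℓ-1})/√d_ℓ` of the network. -/
noncomputable def netLayer (σ : ℝ → ℝ) (d : ℕ → ℕ) (n : ℕ)
    (W : (ℓ : ℕ) → Fin (d (ℓ + 1)) → Fin (d ℓ) → ℝ)
    (X0 : Matrix (Fin (d 0)) (Fin n) ℝ) : (ℓ : ℕ) → Matrix (Fin (d ℓ)) (Fin n) ℝ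
  | 0 => X0
  | ℓ + 1 => (Real.sqrt (d (ℓ + 1)))⁻¹ • ((Matrix.of (W ℓ) * netLayer σ d n W X0 ℓ).map σ)

/-- Squared Frobenius norm. -/
def frobSq {m n : ℕ} (X : Matrix (Fin m) (Fin n) ℝ) : ℝ :=
  ∑ i, ∑ j, (X i j) ^ 2

lemma charInt (z : ℝ) : ∫ g : ℝ, Complex.exp ((g * z : ℝ) * Complex.I) ∂stdGaussian
    = Complex.exp (-((z ^ 2 / 2 : ℝ) : ℂ)) := by
  have h := charFun_gaussianReal (μ := 0) (v := 1) z
  rw [charFun_apply] at h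
  simp only [Complex.ofReal_zero, mul_zero, zero_mul, NNReal.coe_one, Complex.ofReal_one, one_mul,
    zero_sub] at h
  have e : ∀ g : ℝ, inner ℝ g z = g * z := by intro g; simp [mul_comm]
  simp only [e] at h
  rw [h]; push_cast; rfl

lemma law2 {m : ℕ} (x y : Fin m → ℝ) (a r τ : ℝ) (h1 : a ^ 2 = ∑ i, x i ^ 2)
    (h2 : a * r = ∑ i, x i * y i) (h3 : r ^ 2 + τ ^ 2 = ∑ i, y i ^ 2) :
    (gaussianVec m).map (fun w => (∑ i, w i * x i, ∑ i, w i * y i)) =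
    (stdGaussian.prod stdGaussian).map (fun p => (a * p.1, r * p.1 + τ * p.2)) := by
  have m1 : Measurable (fun w : Fin m → ℝ => (∑ i, w i * x i, ∑ i, w i * y i)) := by fun_prop
  have m2 : Measurable (fun p : ℝ × ℝ => (a * p.1, r * p.1 + τ * p.2)) := by fun_prop
  have := Measure.isProbabilityMeasure_map (μ := gaussianVec m) m1.aemeasurable
  have := Measure.isProbabilityMeasure_map (μ := stdGaussian.prod stdGaussian) m2.aemeasurable
  apply Measure.ext_of_charFunDual
  ext L
  obtain ⟨s, t, hL⟩ : ∃ s t : ℝ, ∀ p : ℝ × ℝ, L p = s * p.1 + t * p.2 := by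
    refine ⟨L (1, 0), L (0, 1), fun p => ?_⟩
    have : p = p.1 • ((1 : ℝ), (0 : ℝ)) + p.2 • ((0 : ℝ), (1 : ℝ)) := by ext <;> simp
    conv_lhs => rw [this, map_add, map_smul, map_smul]
    simp [mul_comm]
  have mL : AEStronglyMeasurable (fun v : ℝ × ℝ => Complex.exp (L v * Complex.I))
      ((gaussianVec m).map (fun w => (∑ i, w i * x i, ∑ i, w i * y i))) := by
    apply Continuous.aestronglyMeasurable; fun_prop
  have mL2 : AEStronglyMeasurable (fun v : ℝ × ℝ => Complex.exp (L v * Complex.I))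
      ((stdGaussian.prod stdGaussian).map (fun p => (a * p.1, r * p.1 + τ * p.2))) := by
    apply Continuous.aestronglyMeasurable; fun_prop
  rw [charFunDual_apply, charFunDual_apply, integral_map m1.aemeasurable mL,
    integral_map m2.aemeasurable mL2]
  simp only [hL]
  have e1 : ∀ w : Fin m → ℝ, Complex.exp (((s * (∑ i, w i * x i) + t * ∑ i, w i * y i : ℝ) : ℂ)
      * Complex.I) = ∏ i, Complex.exp (((w i * (s * x i + t * y i) : ℝ) : ℂ) * Complex.I) := by
    intro w
    rw [← Complex.exp_sum, ← Finset.sum_mul, ← Complex.ofReal_sum]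
    congr 3
    rw [Finset.mul_sum, Finset.mul_sum, ← Finset.sum_add_distrib]
    exact Finset.sum_congr rfl fun i _ => by ring
  have e2 : ∀ p : ℝ × ℝ, Complex.exp (((s * (a * p.1) + t * (r * p.1 + τ * p.2) : ℝ) : ℂ)
      * Complex.I) = Complex.exp (((p.1 * (s * a + t * r) : ℝ) : ℂ) * Complex.I) *
        Complex.exp (((p.2 * (t * τ) : ℝ) : ℂ) * Complex.I) := by
    intro p
    rw [← Complex.exp_add]
    congr 1
    push_cast; ring
  simp only [e1, e2]
  rw [integral_fintype_prod_eq_prod (fun i (g : ℝ) =>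
    Complex.exp (((g * (s * x i + t * y i) : ℝ) : ℂ) * Complex.I)),
    integral_prod_mul (fun g : ℝ => Complex.exp (((g * (s * a + t * r) : ℝ) : ℂ) * Complex.I))
      (fun g : ℝ => Complex.exp (((g * (t * τ) : ℝ) : ℂ) * Complex.I))]
  simp only [charInt]
  rw [← Complex.exp_sum, ← Complex.exp_add, Finset.sum_neg_distrib, ← Complex.ofReal_sum,
    ← neg_add, ← Complex.ofReal_add]
  congr 3
  have : ∀ i, (s * x i + t * y i) ^ 2 / 2 = s ^ 2 / 2 * x i ^ 2 + s * t * (x i * y i)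
      + t ^ 2 / 2 * y i ^ 2 := fun i => by ring
  simp only [this]
  rw [Finset.sum_add_distrib, Finset.sum_add_distrib, ← Finset.mul_sum, ← Finset.mul_sum,
    ← Finset.mul_sum, ← h1, ← h2, ← h3]
  ring

lemma law1 {m : ℕ} (x : Fin m → ℝ) (a : ℝ) (h1 : a ^ 2 = ∑ i, x i ^ 2) :
    (gaussianVec m).map (fun w => ∑ i, w i * x i) = stdGaussian.map (fun g => a * g) := by
  have h := law2 x x a a 0 h1 (by rw [← sq, h1]; simp [sq]) (by simpa using h1)
  have h' := congrArg (fun μ => μ.map Prod.fst) h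
  rw [Measure.map_map (by fun_prop) (by fun_prop), Measure.map_map (by fun_prop) (by fun_prop)] at h'
  have : (stdGaussian.prod stdGaussian).map (Prod.fst ∘ fun p : ℝ × ℝ => (a * p.1, a * p.1 + 0 * p.2))
      = ((stdGaussian.prod stdGaussian).map Prod.fst).map (fun g => a * g) := by
    rw [Measure.map_map (by fun_prop) (by fun_prop)]; rfl
  rw [this, Measure.map_fst_prod] at h'
  simpa [Function.comp_def] using h'

open scoped ENNReal in
lemma slice_bound {ι : Type*} [Fintype ι] [DecidableEq ι] {E : ι → Type*}
    [∀ i, MeasurableSpace (E i)] (μ : ∀ i, Measure (E i)) [∀ i, IsProbabilityMeasure (μ i)]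
    (S : Set (∀ i, E i)) (hS : MeasurableSet S) (i : ι) (δ : ℝ≥0∞)
    (h : ∀ x, μ i {y | Function.update x i y ∈ S} ≤ δ) : Measure.pi μ S ≤ δ := by
  have hne : Nonempty (∀ i, E i) := ⟨fun i => (nonempty_of_isProbabilityMeasure (μ i)).some⟩
  obtain ⟨x0⟩ := hne
  have hf : Measurable (S.indicator (fun _ => (1 : ℝ≥0∞))) := measurable_const.indicator hS
  calc Measure.pi μ S = ∫⁻ x, S.indicator (fun _ => (1 : ℝ≥0∞)) x ∂Measure.pi μ := by
        rw [lintegral_indicator hS]; simp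
    _ = (∫⋯∫⁻_Finset.univ, S.indicator (fun _ => (1 : ℝ≥0∞)) ∂μ) x0 :=
        lintegral_eq_lmarginal_univ x0
    _ = _ := by rw [lmarginal_erase' _ hf (Finset.mem_univ i)]
    _ ≤ (∫⋯∫⁻_Finset.univ.erase i, (fun _ => δ) ∂μ) x0 := by
        apply lmarginal_mono
        intro x
        have hm : MeasurableSet {y | Function.update x i y ∈ S} :=
          (measurable_update x) hS
        calc ∫⁻ y, S.indicator (fun _ => (1 : ℝ≥0∞)) (Function.update x i y) ∂μ i
            = ∫⁻ y, {y | Function.update x i y ∈ S}.indicator (fun _ => (1 : ℝ≥0∞)) y ∂μ i := by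
              rfl
          _ = μ i {y | Function.update x i y ∈ S} := by
              rw [lintegral_indicator hm]; simp
          _ ≤ δ := h x
    _ = δ := by
        simp [lmarginal]

lemma exp_le_quad (x : ℝ) : Real.exp x ≤ 1 + x + x ^ 2 * Real.exp |x| := by
  have h := Complex.norm_exp_sub_sum_le_norm_mul_exp (x : ℂ) 2
  have e : Complex.exp x - ∑ m ∈ Finset.range 2, (x : ℂ) ^ m / (m.factorial : ℂ)
      = ((Real.exp x - (1 + x) : ℝ) : ℂ) := by
    simp [Finset.sum_range_succ]
  rw [e, Complex.norm_real, Complex.norm_real, Real.norm_eq_abs, Real.norm_eq_abs, sq_abs] at h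
  linarith [le_abs_self (Real.exp x - (1 + x))]

lemma mgf_bd {E : Type*} [MeasurableSpace E] (ν : Measure E) [IsProbabilityMeasure ν]
    (Y : E → ℝ) (hY : Measurable Y) (t0 M : ℝ) (ht0 : 0 < t0) (h0 : ∫ e, Y e ∂ν = 0)
    (hi : Integrable (fun e => Real.exp (2 * t0 * |Y e|)) ν)
    (hM : ∫ e, Real.exp (2 * t0 * |Y e|) ∂ν ≤ M) (t : ℝ) (ht : |t| ≤ t0) :
    Integrable (fun e => Real.exp (t * Y e)) ν ∧
      ∫ e, Real.exp (t * Y e) ∂ν ≤ Real.exp (2 / t0 ^ 2 * M * t ^ 2) := by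
  have b1 : ∀ e, |t * Y e| ≤ t0 * |Y e| := fun e => by
    rw [abs_mul]; exact mul_le_mul_of_nonneg_right ht (abs_nonneg _)
  have hint : Integrable (fun e => Real.exp (t * Y e)) ν := by
    refine hi.mono' (by fun_prop) (Eventually.of_forall fun e => ?_)
    rw [Real.norm_eq_abs, Real.abs_exp]
    apply Real.exp_le_exp.2
    have := b1 e
    have := le_abs_self (t * Y e)
    have : 0 ≤ t0 * |Y e| := by positivity
    linarith
  have hYi : Integrable Y ν := by
    refine (hi.const_mul (1 / (2 * t0))).mono' hY.aestronglyMeasurable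
      (Eventually.of_forall fun e => ?_)
    rw [Real.norm_eq_abs]
    have := Real.add_one_le_exp (2 * t0 * |Y e|)
    rw [div_mul_eq_mul_div, le_div_iff₀ (by positivity)]
    linarith
  refine ⟨hint, ?_⟩
  have pt : ∀ e, Real.exp (t * Y e) ≤ 1 + t * Y e
      + (2 / t0 ^ 2 * t ^ 2) * Real.exp (2 * t0 * |Y e|) := by
    intro e
    refine (exp_le_quad _).trans ?_
    have h1 : (t * Y e) ^ 2 * Real.exp |t * Y e| ≤
        (t * Y e) ^ 2 * Real.exp (t0 * |Y e|) := by
      gcongr; exact b1 e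
    have h2 : (t0 * |Y e|) ^ 2 / 2 ≤ Real.exp (t0 * |Y e|) := by
      have := Real.quadratic_le_exp_of_nonneg (x := t0 * |Y e|) (by positivity)
      have : 0 ≤ t0 * |Y e| := by positivity
      linarith
    have h3 : (t * Y e) ^ 2 ≤ 2 / t0 ^ 2 * t ^ 2 * Real.exp (t0 * |Y e|) := by
      calc (t * Y e) ^ 2 = 2 / t0 ^ 2 * t ^ 2 * ((t0 * |Y e|) ^ 2 / 2) := by
            rw [mul_pow, mul_pow, sq_abs]; field_simp
        _ ≤ _ := by gcongr
    have h4 : Real.exp (2 * t0 * |Y e|) = Real.exp (t0 * |Y e|) * Real.exp (t0 * |Y e|) := by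
      rw [← Real.exp_add]; ring_nf
    rw [h4]
    have := mul_le_mul_of_nonneg_right h3 (Real.exp_pos (t0 * |Y e|)).le
    linarith
  have I1 : Integrable (fun e => 1 + t * Y e) ν := (integrable_const _).add (hYi.const_mul t)
  calc ∫ e, Real.exp (t * Y e) ∂ν ≤ ∫ e, (1 + t * Y e
      + (2 / t0 ^ 2 * t ^ 2) * Real.exp (2 * t0 * |Y e|)) ∂ν :=
        integral_mono hint (I1.add (hi.const_mul _)) pt
    _ = 1 + (2 / t0 ^ 2 * t ^ 2) * ∫ e, Real.exp (2 * t0 * |Y e|) ∂ν := by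
        rw [integral_add I1 (hi.const_mul _), integral_add (integrable_const _) (hYi.const_mul t),
          integral_const_mul, integral_const_mul, h0]
        simp
    _ ≤ 1 + (2 / t0 ^ 2 * t ^ 2) * M := by gcongr
    _ ≤ _ := by
        have := Real.add_one_le_exp (2 / t0 ^ 2 * M * t ^ 2)
        linarith

lemma conc_one {E : Type*} [MeasurableSpace E] (ν : Measure E) [IsProbabilityMeasure ν]
    (Y : E → ℝ) (hY : Measurable Y) (t0 M : ℝ) (ht0 : 0 < t0) (h0 : ∫ e, Y e ∂ν = 0)
    (hi : Integrable (fun e => Real.exp (2 * t0 * |Y e|)) ν)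
    (hM : ∫ e, Real.exp (2 * t0 * |Y e|) ∂ν ≤ M) (d : ℕ) (hd : 0 < d)
    (hdt : (Real.sqrt d)⁻¹ ≤ t0) (u : ℝ) :
    (Measure.pi (fun _ : Fin d => ν)).real {w | u * Real.sqrt d ≤ ∑ i, Y (w i)} ≤
      Real.exp (2 / t0 ^ 2 * M) * Real.exp (-u) := by
  have hs : 0 < Real.sqrt d := Real.sqrt_pos.2 (by exact_mod_cast hd)
  set t := (Real.sqrt d)⁻¹ with htdef
  have ht : 0 < t := by positivity
  obtain ⟨hint, hbd⟩ := mgf_bd ν Y hY t0 M ht0 h0 hi hM t (by rwa [abs_of_pos ht])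
  have ee : ∀ w : Fin d → E, Real.exp (t * ∑ i, Y (w i)) = ∏ i, Real.exp (t * Y (w i)) := by
    intro w; rw [Finset.mul_sum, Real.exp_sum]
  have h := measure_ge_le_exp_mul_mgf (μ := Measure.pi (fun _ : Fin d => ν))
    (X := fun w => ∑ i, Y (w i)) (t := t) (u * Real.sqrt d) ht.le (by
      simp only [ee]
      exact Integrable.fintype_prod (f := fun _ e => Real.exp (t * Y e)) (fun _ => hint))
  refine h.trans ?_
  have hm : mgf (fun w : Fin d → E => ∑ i, Y (w i)) (Measure.pi (fun _ : Fin d => ν)) t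
      ≤ Real.exp (2 / t0 ^ 2 * M) := by
    rw [mgf]
    simp only [ee]
    rw [integral_fintype_prod_eq_prod (fun _ e => Real.exp (t * Y e))]
    simp only [Finset.prod_const, Finset.card_univ, Fintype.card_fin]
    calc _ ≤ (Real.exp (2 / t0 ^ 2 * M * t ^ 2)) ^ d := by
          gcongr
      _ = _ := by
          rw [← Real.exp_nat_mul]
          congr 1
          have : t ^ 2 = (d : ℝ)⁻¹ := by
            rw [htdef, inv_pow, Real.sq_sqrt (by positivity)]
          rw [this]; field_simp
  have e3 : -t * (u * Real.sqrt d) = -u := by rw [htdef]; field_simp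
  rw [e3, mul_comm]
  gcongr

lemma conc {E : Type*} [MeasurableSpace E] (ν : Measure E) [IsProbabilityMeasure ν]
    (Y : E → ℝ) (hY : Measurable Y) (t0 M : ℝ) (ht0 : 0 < t0) (h0 : ∫ e, Y e ∂ν = 0)
    (hi : Integrable (fun e => Real.exp (2 * t0 * |Y e|)) ν)
    (hM : ∫ e, Real.exp (2 * t0 * |Y e|) ∂ν ≤ M) (d : ℕ) (hd : 0 < d)
    (hdt : (Real.sqrt d)⁻¹ ≤ t0) (u : ℝ) :
    Measure.pi (fun _ : Fin d => ν) {w | u * Real.sqrt d ≤ |∑ i, Y (w i)|} ≤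
      ENNReal.ofReal (2 * Real.exp (2 / t0 ^ 2 * M) * Real.exp (-u)) := by
  have a1 := conc_one ν Y hY t0 M ht0 h0 hi hM d hd hdt u
  have a2 := conc_one ν (fun e => - Y e) hY.neg t0 M ht0 (by rw [integral_neg, h0, neg_zero])
    (by simpa using hi) (by simpa using hM) d hd hdt u
  set P := Measure.pi (fun _ : Fin d => ν)
  have hsub : {w : Fin d → E | u * Real.sqrt d ≤ |∑ i, Y (w i)|} ⊆
      {w | u * Real.sqrt d ≤ ∑ i, Y (w i)} ∪ {w | u * Real.sqrt d ≤ ∑ i, - Y (w i)} := by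
    intro w hw
    simp only [Set.mem_ofPred_eq, Set.mem_union, Finset.sum_neg_distrib] at hw ⊢
    exact le_abs.1 hw
  calc P _ ≤ P ({w | u * Real.sqrt d ≤ ∑ i, Y (w i)} ∪ {w | u * Real.sqrt d ≤ ∑ i, - Y (w i)}) :=
        measure_mono hsub
    _ ≤ _ := measure_union_le _ _
    _ = ENNReal.ofReal (P.real {w | u * Real.sqrt d ≤ ∑ i, Y (w i)}) +
        ENNReal.ofReal (P.real {w | u * Real.sqrt d ≤ ∑ i, - Y (w i)}) := by
        simp [Measure.real]
    _ = ENNReal.ofReal (P.real {w | u * Real.sqrt d ≤ ∑ i, Y (w i)} +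
          P.real {w | u * Real.sqrt d ≤ ∑ i, - Y (w i)}) := by
        rw [ENNReal.ofReal_add] <;> positivity
    _ ≤ _ := ENNReal.ofReal_le_ofReal (by linarith)

structure Act (σ σ' : ℝ → ℝ) (lam : ℝ) : Prop where
  d1 : ∀ x, HasDerivAt σ (σ' x) x
  bdd : ∀ x, |σ' x| ≤ lam
  lip' : ∀ x y, |σ' x - σ' y| ≤ lam * |x - y|
  mean : (∫ x, σ x ∂stdGaussian) = 0
  var : (∫ x, (σ x) ^ 2 ∂stdGaussian) = 1

lemma lip_of_deriv (f f' : ℝ → ℝ) (lam : ℝ) (h : ∀ x, HasDerivAt f (f' x) x)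
    (hb : ∀ x, |f' x| ≤ lam) (x y : ℝ) : |f x - f y| ≤ lam * |x - y| := by
  have := convex_univ.norm_image_sub_le_of_norm_hasDerivWithin_le (f := f) (f' := f') (s := Set.univ)
    (fun x _ => (h x).hasDerivWithinAt) (fun x _ => hb x) (Set.mem_univ y) (Set.mem_univ x)
  simpa using this

lemma gint (k : ℕ) : Integrable (fun g : ℝ => |g| ^ k) stdGaussian := by
  have := (memLp_id_gaussianReal (μ := 0) (v := 1) (k : NNReal)).integrable_norm_pow'
  simpa using this

namespace Act
variable {σ σ' : ℝ → ℝ} {lam : ℝ}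

lemma lam_nonneg (h : Act σ σ' lam) : 0 ≤ lam := (abs_nonneg _).trans (h.bdd 0)

lemma lip (h : Act σ σ' lam) (x y : ℝ) : |σ x - σ y| ≤ lam * |x - y| :=
  lip_of_deriv σ σ' lam h.d1 h.bdd x y

lemma cont (h : Act σ σ' lam) : Continuous σ :=
  continuous_iff_continuousAt.2 fun x => (h.d1 x).continuousAt

lemma cont' (h : Act σ σ' lam) : Continuous σ' := by
  have : LipschitzWith (Real.toNNReal lam) σ' := LipschitzWith.of_dist_le_mul fun x y => by
    rw [Real.dist_eq, Real.dist_eq, Real.coe_toNNReal _ h.lam_nonneg]; exact h.lip' x y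
  exact this.continuous

lemma growth (h : Act σ σ' lam) (x : ℝ) : |σ x| ≤ |σ 0| + lam * |x| := by
  have := h.lip x 0
  have h2 := abs_sub_abs_le_abs_sub (σ x) (σ 0)
  simp only [sub_zero] at this
  linarith

lemma taylor (h : Act σ σ' lam) (y t : ℝ) : |σ (t + y) - σ y - t * σ' y| ≤ lam * t ^ 2 := by
  have hd : ∀ x, HasDerivAt (fun z => σ z - z * σ' y) (σ' x - σ' y) x := fun x => by
    have h2 : HasDerivAt (fun z : ℝ => z * σ' y) (1 * σ' y) x := (hasDerivAt_id x).mul_const (σ' y)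
    rw [one_mul] at h2
    exact (h.d1 x).sub h2
  have := (convex_closedBall y |t|).norm_image_sub_le_of_norm_hasDerivWithin_le
    (f := fun z => σ z - z * σ' y) (f' := fun x => σ' x - σ' y) (C := lam * |t|)
    (fun x _ => (hd x).hasDerivWithinAt) (fun x hx => by
      rw [Metric.mem_closedBall, Real.dist_eq] at hx
      exact (h.lip' x y).trans (mul_le_mul_of_nonneg_left hx h.lam_nonneg))
    (x := y) (y := t + y) (by simp) (by simp)
  simp only [Real.norm_eq_abs, add_sub_cancel_right] at this
  calc _ = |σ (t + y) - (t + y) * σ' y - (σ y - y * σ' y)| := by ring_nf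
    _ ≤ _ := this
    _ = _ := by rw [mul_assoc, ← sq, sq_abs]

lemma stein (h : Act σ σ' lam) : ∫ g, g * σ g ∂stdGaussian = ∫ g, σ' g ∂stdGaussian := by
  have hv : (1 : NNReal) ≠ 0 := one_ne_zero
  have tr : ∀ f : ℝ → ℝ, Integrable f stdGaussian ↔
      Integrable (fun x => f x * gaussianPDFReal 0 1 x) := by
    intro f
    rw [_root_.stdGaussian, gaussianReal_of_var_ne_zero _ hv,
      integrable_withDensity_iff (measurable_gaussianPDF 0 1)
        (Eventually.of_forall fun x => gaussianPDF_lt_top)]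
    simp [toReal_gaussianPDF]
  rw [integral_gaussianReal_eq_integral_smul hv, integral_gaussianReal_eq_integral_smul hv]
  have hp : ∀ x, HasDerivAt (gaussianPDFReal 0 1) (-x * gaussianPDFReal 0 1 x) x := by
    intro x
    have : HasDerivAt (fun x : ℝ => (Real.sqrt (2 * Real.pi * (1 : NNReal)))⁻¹ *
        Real.exp (-(x - 0) ^ 2 / (2 * (1 : NNReal)))) _ x :=
      ((((((hasDerivAt_id x).sub_const 0).pow 2).neg).div_const
        (2 * ((1 : NNReal) : ℝ))).exp).const_mul _
    rw [gaussianPDFReal_def]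
    convert this using 1
    simp
    ring
  have i1 : Integrable (fun g => g * σ g) stdGaussian := by
    refine ((((gint 1).const_mul |σ 0|)).add ((gint 2).const_mul lam)).mono'
      (continuous_id.mul h.cont).aestronglyMeasurable (Eventually.of_forall fun g => ?_)
    have := mul_le_mul_of_nonneg_left (h.growth g) (abs_nonneg g)
    simp only [Real.norm_eq_abs, abs_mul, Pi.add_apply]
    nlinarith
  have i2 : Integrable σ' stdGaussian :=
    (integrable_const lam).mono' h.cont'.aestronglyMeasurable (Eventually.of_forall h.bdd)
  have i3 : Integrable σ stdGaussian :=
    ((integrable_const |σ 0|).add ((gint 1).const_mul lam)).mono' h.cont.aestronglyMeasurable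
      (Eventually.of_forall fun g => by simpa using h.growth g)
  have := integral_mul_deriv_eq_deriv_mul_of_integrable (u := σ) (v := gaussianPDFReal 0 1)
    (u' := σ') (v' := fun x => -x * gaussianPDFReal 0 1 x) (fun x _ => h.d1 x) (fun x _ => hp x)
    (by
      refine (((tr _).1 i1).neg).congr (Eventually.of_forall fun x => ?_)
      simp; ring)
    ((tr _).1 i2) ((tr _).1 i3)
  have e1 : ∀ x, gaussianPDFReal 0 1 x • (x * σ x) = -(σ x * (-x * gaussianPDFReal 0 1 x)) := by
    intro x; simp only [smul_eq_mul]; ring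
  simp only [e1, integral_neg, this, neg_neg]
  refine integral_congr_ae (Eventually.of_forall fun x => ?_)
  simp [mul_comm]

end Act

lemma exp_int : ∃ c : ℝ, 0 < c ∧ Integrable (fun g : ℝ => Real.exp (c * g ^ 2)) stdGaussian := by
  obtain ⟨C, hC, h⟩ := IsGaussian.exists_integrable_exp_sq (gaussianReal 0 1)
  exact ⟨C, hC, by simpa using h⟩

/-- absolute moments -/
noncomputable def gm (k : ℕ) : ℝ := ∫ g : ℝ, |g| ^ k ∂stdGaussian

lemma gm_nonneg (k : ℕ) : 0 ≤ gm k := integral_nonneg fun _ => by positivity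

/-- difference of integrals bound -/
lemma int_diff_le (f h k : ℝ → ℝ) (hf : Integrable f stdGaussian) (hh : Integrable h stdGaussian)
    (hk : Integrable k stdGaussian) (b : ∀ x, |f x - h x| ≤ k x) :
    |∫ x, f x ∂stdGaussian - ∫ x, h x ∂stdGaussian| ≤ ∫ x, k x ∂stdGaussian := by
  rw [← integral_sub hf hh]
  exact norm_integral_le_of_norm_le (f := fun x => f x - h x) hk (Eventually.of_forall b)

namespace Act
variable {σ σ' : ℝ → ℝ} {lam : ℝ}

lemma int_s (h : Act σ σ' lam) (a : ℝ) : Integrable (fun g => σ (a * g)) stdGaussian := by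
  have := h.cont
  refine ((integrable_const |σ 0|).add ((gint 1).const_mul (lam * |a|))).mono'
    (Continuous.aestronglyMeasurable (by fun_prop)) (Eventually.of_forall fun g => ?_)
  have := h.growth (a * g)
  rw [abs_mul] at this
  simp only [Real.norm_eq_abs, Pi.add_apply, pow_one]
  linarith

lemma int_gs (h : Act σ σ' lam) (a : ℝ) : Integrable (fun g => g * σ (a * g)) stdGaussian := by
  have := h.cont
  refine (((gint 1).const_mul |σ 0|).add ((gint 2).const_mul (lam * |a|))).mono'
    (Continuous.aestronglyMeasurable (by fun_prop)) (Eventually.of_forall fun g => ?_)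
  have := mul_le_mul_of_nonneg_left (h.growth (a * g)) (abs_nonneg g)
  rw [abs_mul a g] at this
  simp only [Real.norm_eq_abs, Pi.add_apply, pow_one, abs_mul]
  nlinarith

lemma int_ggs (h : Act σ σ' lam) (a : ℝ) :
    Integrable (fun g => |σ (a * g)| * g ^ 2) stdGaussian := by
  have := h.cont
  refine (((gint 2).const_mul |σ 0|).add ((gint 3).const_mul (lam * |a|))).mono'
    (Continuous.aestronglyMeasurable (by fun_prop)) (Eventually.of_forall fun g => ?_)
  have := mul_le_mul_of_nonneg_right (h.growth (a * g)) (sq_nonneg |g|)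
  rw [abs_mul a g] at this
  simp only [Real.norm_eq_abs, Pi.add_apply, abs_mul, abs_abs, abs_pow]
  nlinarith

lemma int_ss (h : Act σ σ' lam) (a : ℝ) : Integrable (fun g => σ (a * g) ^ 2) stdGaussian := by
  have := h.cont
  refine ((integrable_const (2 * |σ 0| ^ 2)).add ((gint 2).const_mul (2 * (lam * |a|) ^ 2))).mono'
    (Continuous.aestronglyMeasurable (by fun_prop)) (Eventually.of_forall fun g => ?_)
  have := pow_le_pow_left₀ (abs_nonneg _) (h.growth (a * g)) 2
  rw [abs_mul a g] at this
  simp only [Real.norm_eq_abs, Pi.add_apply, abs_pow]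
  nlinarith [sq_nonneg (|σ 0| - lam * (|a| * |g|))]

lemma int_s' (h : Act σ σ' lam) (a : ℝ) : Integrable (fun g => σ' (a * g)) stdGaussian := by
  have := h.cont'
  exact (integrable_const lam).mono' (Continuous.aestronglyMeasurable (by fun_prop))
    (Eventually.of_forall fun g => h.bdd _)

lemma pt_lip (h : Act σ σ' lam) {a ε : ℝ} (ha : |a - 1| ≤ ε) (g : ℝ) :
    |σ (a * g) - σ g| ≤ lam * ε * |g| := by
  refine (h.lip _ _).trans ?_
  rw [mul_assoc]
  refine mul_le_mul_of_nonneg_left ?_ h.lam_nonneg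
  rw [show a * g - g = (a - 1) * g by ring, abs_mul]
  exact mul_le_mul_of_nonneg_right ha (abs_nonneg _)

lemma diag (h : Act σ σ' lam) : ∃ C, 0 ≤ C ∧ ∀ a ε : ℝ, |a - 1| ≤ ε → ε ≤ 1 →
    |∫ g, σ (a * g) ^ 2 ∂stdGaussian - 1| ≤ C * ε := by
  have hl := h.lam_nonneg
  refine ⟨lam * (2 * |σ 0| * gm 1 + 3 * lam * gm 2), ?_, ?_⟩
  · have := gm_nonneg 1
    have := gm_nonneg 2
    positivity
  intro a ε ha hε
  have he : 0 ≤ ε := (abs_nonneg _).trans ha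
  rw [← h.var]
  have i1 := h.int_ss 1
  simp only [one_mul] at i1
  refine (int_diff_le _ _ (fun g => lam * ε * (2 * |σ 0|) * |g| ^ 1 + lam * ε * (3 * lam) * |g| ^ 2)
    (h.int_ss a) i1 (((gint 1).const_mul _).add ((gint 2).const_mul _)) ?_).trans (le_of_eq ?_)
  · intro g
    rw [sq_sub_sq, abs_mul]
    have h1 := h.pt_lip ha g
    have h2 : |σ (a * g) + σ g| ≤ 2 * |σ 0| + 3 * lam * |g| := by
      refine (abs_add_le _ _).trans ?_
      have h3 := h.growth (a * g)
      have h4 := h.growth g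
      have h5 : |a| ≤ 2 := by
        have := abs_le.1 ha
        exact abs_le.2 ⟨by linarith, by linarith⟩
      rw [abs_mul] at h3
      have : lam * (|a| * |g|) ≤ lam * (2 * |g|) := by gcongr
      linarith
    calc _ ≤ (2 * |σ 0| + 3 * lam * |g|) * (lam * ε * |g|) := by gcongr
      _ = _ := by ring
  · rw [integral_add ((gint 1).const_mul _) ((gint 2).const_mul _), integral_const_mul,
      integral_const_mul]
    simp only [gm]; ring

lemma off (h : Act σ σ' lam) : ∃ C, 0 ≤ C ∧ ∀ a r τ ε : ℝ, |a - 1| ≤ ε → |τ - 1| ≤ ε → |r| ≤ ε →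
    ε ≤ 1 → |∫ p : ℝ × ℝ, σ (a * p.1) * σ (r * p.1 + τ * p.2) ∂(stdGaussian.prod stdGaussian)
      - (∫ x, σ' x ∂stdGaussian) ^ 2 * (a * r)| ≤ C * ε ^ 2 := by
  have hl := h.lam_nonneg
  have g1 := gm_nonneg 1
  have g2 := gm_nonneg 2
  have g3 := gm_nonneg 3
  refine ⟨(lam * gm 1) ^ 2 + (lam * gm 2 * lam + lam * (lam * gm 1) + lam ^ 2)
    + lam * (|σ 0| * gm 2 + 2 * lam * gm 3), by positivity, ?_⟩
  intro a r τ ε ha hτ hr hε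
  have he : 0 ≤ ε := (abs_nonneg _).trans ha
  have h5 : |a| ≤ 2 := by
    have := abs_le.1 ha
    exact abs_le.2 ⟨by linarith, by linarith⟩
  set b := ∫ x, σ' x ∂stdGaussian with hb
  have hbl : |b| ≤ lam := by
    have := norm_integral_le_of_norm_le_const (μ := stdGaussian) (f := σ') (C := lam)
      (Eventually.of_forall h.bdd)
    simpa using this
  have i1 := h.int_s 1
  have i2 := h.int_gs 1
  have i3 := h.int_s' 1
  simp only [one_mul] at i1 i2 i3
  have mean : ∀ c, |c - 1| ≤ ε → |∫ g, σ (c * g) ∂stdGaussian| ≤ lam * gm 1 * ε := by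
    intro c hc
    have := int_diff_le _ _ (fun g => lam * ε * |g| ^ 1) (h.int_s c) i1 ((gint 1).const_mul _)
      (fun g => by simpa using h.pt_lip hc g)
    rw [h.mean, sub_zero, integral_const_mul] at this
    refine this.trans (le_of_eq ?_)
    simp only [gm]; ring
  have A1 : |∫ g, g * σ (a * g) ∂stdGaussian - b| ≤ lam * gm 2 * ε := by
    rw [hb, ← h.stein]
    refine (int_diff_le _ _ (fun g => lam * ε * |g| ^ 2) (h.int_gs a) i2 ((gint 2).const_mul _)
      (fun g => ?_)).trans (le_of_eq ?_)
    · rw [← mul_sub, abs_mul]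
      have := mul_le_mul_of_nonneg_left (h.pt_lip ha g) (abs_nonneg g)
      linarith
    · rw [integral_const_mul]; simp only [gm]; ring
  have B1 : |∫ g, σ' (τ * g) ∂stdGaussian - b| ≤ lam * gm 1 * ε := by
    refine (int_diff_le _ _ (fun g => lam * ε * |g| ^ 1) (h.int_s' τ) i3 ((gint 1).const_mul _)
      (fun g => ?_)).trans (le_of_eq ?_)
    · refine (h.lip' _ _).trans ?_
      rw [show τ * g - g = (τ - 1) * g by ring, abs_mul, pow_one, mul_assoc]
      gcongr
    · rw [integral_const_mul]; simp only [gm]; ring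
  have B2 : |∫ g, σ' (τ * g) ∂stdGaussian| ≤ lam := by
    have := norm_integral_le_of_norm_le_const (μ := stdGaussian) (f := fun g => σ' (τ * g))
      (C := lam) (Eventually.of_forall fun g => h.bdd _)
    simpa using this
  have D1 : ∫ g, |σ (a * g)| * g ^ 2 ∂stdGaussian ≤ |σ 0| * gm 2 + 2 * lam * gm 3 := by
    calc _ ≤ ∫ g, (|σ 0| * |g| ^ 2 + 2 * lam * |g| ^ 3) ∂stdGaussian := by
          refine integral_mono (h.int_ggs a) (((gint 2).const_mul _).add ((gint 3).const_mul _)) ?_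
          intro g
          have h3 := h.growth (a * g)
          rw [abs_mul] at h3
          have h4 : lam * (|a| * |g|) ≤ lam * (2 * |g|) := by gcongr
          have := mul_le_mul_of_nonneg_right (h3.trans (by gcongr : |σ 0| + lam * (|a| * |g|) ≤
            |σ 0| + lam * (2 * |g|))) (sq_nonneg |g|)
          simp only
          rw [← sq_abs g]
          linarith
      _ = _ := by
          rw [integral_add ((gint 2).const_mul _) ((gint 3).const_mul _), integral_const_mul,
            integral_const_mul]
          rfl
  -- decomposition
  set P := stdGaussian.prod stdGaussian
  set f1 : ℝ × ℝ → ℝ := fun p => σ (a * p.1) * σ (τ * p.2) with hf1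
  set f2 : ℝ × ℝ → ℝ := fun p => (p.1 * σ (a * p.1)) * σ' (τ * p.2) with hf2
  set R : ℝ × ℝ → ℝ := fun p => σ (a * p.1) *
    (σ (r * p.1 + τ * p.2) - σ (τ * p.2) - (r * p.1) * σ' (τ * p.2)) with hR
  have I1 : Integrable f1 P := (h.int_s a).mul_prod (h.int_s τ)
  have I2 : Integrable f2 P := (h.int_gs a).mul_prod (h.int_s' τ)
  have ID : Integrable (fun p : ℝ × ℝ => (|σ (a * p.1)| * p.1 ^ 2) * 1) P :=
    (h.int_ggs a).mul_prod (integrable_const (1 : ℝ))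
  have hRb : ∀ p, ‖R p‖ ≤ lam * r ^ 2 * ((|σ (a * p.1)| * p.1 ^ 2) * 1) := by
    intro p
    rw [hR, Real.norm_eq_abs, abs_mul]
    have := mul_le_mul_of_nonneg_left (h.taylor (τ * p.2) (r * p.1)) (abs_nonneg (σ (a * p.1)))
    refine this.trans (le_of_eq ?_)
    ring
  have hc := h.cont
  have hc' := h.cont'
  have IR : Integrable R P := (ID.const_mul (lam * r ^ 2)).mono'
    (Continuous.aestronglyMeasurable (by fun_prop)) (Eventually.of_forall hRb)
  have hRi : |∫ p, R p ∂P| ≤ lam * ε ^ 2 * (|σ 0| * gm 2 + 2 * lam * gm 3) := by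
    have h1 := norm_integral_le_of_norm_le (ID.const_mul (lam * r ^ 2)) (Eventually.of_forall hRb)
    rw [integral_const_mul, integral_prod_mul (fun g : ℝ => |σ (a * g)| * g ^ 2)
      (fun _ : ℝ => (1 : ℝ))] at h1
    simp only [integral_const, probReal_univ, smul_eq_mul, mul_one] at h1
    have hr2 : r ^ 2 ≤ ε ^ 2 := by rw [← sq_abs]; gcongr
    calc _ ≤ _ := h1
      _ ≤ lam * ε ^ 2 * (|σ 0| * gm 2 + 2 * lam * gm 3) := by
        gcongr
  have e : ∫ p : ℝ × ℝ, σ (a * p.1) * σ (r * p.1 + τ * p.2) ∂P =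
      (∫ g, σ (a * g) ∂stdGaussian) * (∫ g, σ (τ * g) ∂stdGaussian) +
      r * ((∫ g, g * σ (a * g) ∂stdGaussian) * ∫ g, σ' (τ * g) ∂stdGaussian) + ∫ p, R p ∂P := by
    rw [← integral_prod_mul (fun g => σ (a * g)) (fun g => σ (τ * g)),
      ← integral_prod_mul (fun g => g * σ (a * g)) (fun g => σ' (τ * g)), ← integral_const_mul,
      ← integral_add I1 (I2.const_mul r)]
    have I3 : Integrable (fun p => f1 p + r * f2 p) P := I1.add (I2.const_mul r)
    rw [← integral_add I3 IR]
    refine integral_congr_ae (Eventually.of_forall fun p => ?_)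
    simp only [hR, hf1, hf2]
    ring
  rw [e]
  have M1 := mean a ha
  have M2 := mean τ hτ
  generalize (∫ g, σ (a * g) ∂stdGaussian) = s1 at *
  generalize (∫ g, σ (τ * g) ∂stdGaussian) = s2 at *
  generalize (∫ g, g * σ (a * g) ∂stdGaussian) = A at *
  generalize (∫ g, σ' (τ * g) ∂stdGaussian) = B at *
  generalize (∫ p, R p ∂P) = Q at *
  have T1 : |s1 * s2| ≤ (lam * gm 1 * ε) * (lam * gm 1 * ε) := by
    rw [abs_mul]; gcongr
  have T2 : |A * B - b ^ 2 * a| ≤ (lam * gm 2 * lam + lam * (lam * gm 1) + lam ^ 2) * ε := by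
    have : A * B - b ^ 2 * a = (A - b) * B + b * (B - b) + b * b * (1 - a) := by ring
    rw [this]
    have u1 : |(A - b) * B| ≤ (lam * gm 2 * ε) * lam := by rw [abs_mul]; gcongr
    have u2 : |b * (B - b)| ≤ lam * (lam * gm 1 * ε) := by rw [abs_mul]; gcongr
    have u3 : |b * b * (1 - a)| ≤ lam * lam * ε := by
      rw [abs_mul, abs_mul, abs_sub_comm 1 a]; gcongr
    have := abs_add_three ((A - b) * B) (b * (B - b)) (b * b * (1 - a))
    linarith
  have T3 : |r * (A * B - b ^ 2 * a)| ≤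
      ε * ((lam * gm 2 * lam + lam * (lam * gm 1) + lam ^ 2) * ε) := by
    rw [abs_mul]; gcongr
  have : s1 * s2 + r * (A * B) + Q - b ^ 2 * (a * r) = s1 * s2 + r * (A * B - b ^ 2 * a) + Q := by
    ring
  rw [this]
  have := abs_add_three (s1 * s2) (r * (A * B - b ^ 2 * a)) Q
  linarith

lemma expb (h : Act σ σ' lam) : ∃ t M : ℝ, 0 < t ∧ ∀ a : ℝ, |a| ≤ 2 →
    Integrable (fun g => Real.exp (2 * t * σ (a * g) ^ 2)) stdGaussian ∧
    ∫ g, Real.exp (2 * t * σ (a * g) ^ 2) ∂stdGaussian ≤ M := by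
  obtain ⟨c, hc, hi⟩ := exp_int
  have hl := h.lam_nonneg
  have hcont := h.cont
  set t := c / (16 * (lam ^ 2 + 1)) with ht
  have ht0 : 0 < t := by positivity
  have key : ∀ a : ℝ, |a| ≤ 2 → ∀ g : ℝ, Real.exp (2 * t * σ (a * g) ^ 2) ≤
      Real.exp (4 * t * σ 0 ^ 2) * Real.exp (c * g ^ 2) := by
    intro a ha g
    rw [← Real.exp_add]
    apply Real.exp_le_exp.2
    have h3 := h.growth (a * g)
    rw [abs_mul] at h3
    have h4 : lam * (|a| * |g|) ≤ lam * (2 * |g|) := by gcongr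
    have h6 := pow_le_pow_left₀ (abs_nonneg _) (h3.trans (by gcongr : |σ 0| + lam * (|a| * |g|) ≤
            |σ 0| + lam * (2 * |g|))) 2
    have h7 : σ (a * g) ^ 2 ≤ 2 * σ 0 ^ 2 + 8 * lam ^ 2 * g ^ 2 := by
      rw [← sq_abs (σ (a * g)), ← sq_abs (σ 0), ← sq_abs g]
      nlinarith [sq_nonneg (|σ 0| - lam * (2 * |g|))]
    have h8 : 16 * t * (lam ^ 2 + 1) = c := by rw [ht]; field_simp
    have : 2 * t * σ (a * g) ^ 2 ≤ 2 * t * (2 * σ 0 ^ 2 + 8 * lam ^ 2 * g ^ 2) := by gcongr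
    have : 0 ≤ t * g ^ 2 := by positivity
    rw [← h8]
    nlinarith
  have hI := hi.const_mul (Real.exp (4 * t * σ 0 ^ 2))
  refine ⟨t, ∫ g, Real.exp (4 * t * σ 0 ^ 2) * Real.exp (c * g ^ 2) ∂stdGaussian, ht0, fun a ha => ?_⟩
  have h1 : Integrable (fun g => Real.exp (2 * t * σ (a * g) ^ 2)) stdGaussian :=
    hI.mono' (Continuous.aestronglyMeasurable (by fun_prop)) (Eventually.of_forall fun g => by
      rw [Real.norm_eq_abs, Real.abs_exp]; exact key a ha g)
  exact ⟨h1, integral_mono h1 hI (key a ha)⟩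

end Act

lemma abs_sub_one_le {a ε : ℝ} (ha : 0 ≤ a) (h : |a ^ 2 - 1| ≤ ε) : |a - 1| ≤ ε := by
  refine le_trans ?_ h
  rw [show a ^ 2 - 1 = (a - 1) * (a + 1) by ring, abs_mul, abs_of_nonneg (by linarith : 0 ≤ a + 1)]
  nlinarith [abs_nonneg (a - 1)]

namespace Act
variable {σ σ' : ℝ → ℝ} {lam : ℝ}

lemma vint (f : ℝ → ℝ) (hf : Continuous f) {m : ℕ} (x : Fin m → ℝ) (a : ℝ)
    (ha : a ^ 2 = ∑ i, x i ^ 2) :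
    (∫ w, f (∑ i, w i * x i) ∂gaussianVec m = ∫ g, f (a * g) ∂stdGaussian) ∧
    (Integrable (fun g => f (a * g)) stdGaussian →
      Integrable (fun w => f (∑ i, w i * x i)) (gaussianVec m)) := by
  have hl := law1 x a ha
  have m1 : AEMeasurable (fun w : Fin m → ℝ => ∑ i, w i * x i) (gaussianVec m) :=
    Measurable.aemeasurable (by fun_prop)
  have m2 : AEMeasurable (fun g : ℝ => a * g) stdGaussian := by fun_prop
  constructor
  · rw [← integral_map m1 (f := f) hf.aestronglyMeasurable, hl,
      integral_map m2 hf.aestronglyMeasurable]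
  · intro h
    have h2 := (integrable_map_measure (f := fun g : ℝ => a * g) (g := f)
      hf.aestronglyMeasurable m2).2 h
    rw [← hl] at h2
    exact (integrable_map_measure (f := fun w : Fin m → ℝ => ∑ i, w i * x i) (g := f)
      hf.aestronglyMeasurable m1).1 h2

lemma vdiag (h : Act σ σ' lam) : ∃ C, 0 ≤ C ∧ ∀ (m : ℕ) (x : Fin m → ℝ) (ε : ℝ),
    |∑ i, x i ^ 2 - 1| ≤ ε → ε ≤ 1 →
    |∫ w, σ (∑ i, w i * x i) * σ (∑ i, w i * x i) ∂gaussianVec m - 1| ≤ C * ε := by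
  obtain ⟨C, hC, H⟩ := h.diag
  have hc := h.cont
  refine ⟨C, hC, fun m x ε hx hε => ?_⟩
  have ha : Real.sqrt (∑ i, x i ^ 2) ^ 2 = ∑ i, x i ^ 2 :=
    Real.sq_sqrt (Finset.sum_nonneg fun i _ => sq_nonneg _)
  rw [(vint (fun z => σ z * σ z) (by fun_prop) x _ ha).1]
  simp only [← sq]
  exact H _ ε (abs_sub_one_le (Real.sqrt_nonneg _) (by rwa [ha])) hε

lemma voff (h : Act σ σ' lam) : ∃ C, 0 ≤ C ∧ ∀ (m : ℕ) (x y : Fin m → ℝ) (ε : ℝ),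
    |∑ i, x i ^ 2 - 1| ≤ ε → |∑ i, y i ^ 2 - 1| ≤ ε → |∑ i, x i * y i| ≤ ε → ε ≤ 1 / 2 →
    |∫ w, σ (∑ i, w i * x i) * σ (∑ i, w i * y i) ∂gaussianVec m
      - (∫ x, σ' x ∂stdGaussian) ^ 2 * (∑ i, x i * y i)| ≤ C * ε ^ 2 := by
  obtain ⟨C, hC, H⟩ := h.off
  have hc := h.cont
  refine ⟨C * 4, by positivity, fun m x y ε hx hy hxy hε => ?_⟩
  have he : 0 ≤ ε := (abs_nonneg _).trans hx
  have ha : Real.sqrt (∑ i, x i ^ 2) ^ 2 = ∑ i, x i ^ 2 :=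
    Real.sq_sqrt (Finset.sum_nonneg fun i _ => sq_nonneg _)
  set a := Real.sqrt (∑ i, x i ^ 2)
  have ha0 : 0 ≤ a := Real.sqrt_nonneg _
  rw [← ha] at hx
  have hx' := abs_le.1 hx
  have ha1 : 1 / 2 ≤ a := by nlinarith
  set ρ := ∑ i, x i * y i
  set c := ∑ i, y i ^ 2
  have hy' := abs_le.1 hy
  set r := ρ / a with hr
  have har : a * r = ρ := by rw [hr]; field_simp
  have hr1 : |r| ≤ 2 * ε := by
    rw [hr, abs_div, abs_of_nonneg ha0, div_le_iff₀ (by linarith)]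
    nlinarith
  have hr2 : r ^ 2 ≤ 2 * ε ^ 2 := by
    have e1 : (a * r) ^ 2 ≤ ε ^ 2 := by rw [har, ← sq_abs]; gcongr
    rw [mul_pow] at e1
    nlinarith [sq_nonneg r]
  have hτ0 : 0 ≤ c - r ^ 2 := by nlinarith
  have hτ : Real.sqrt (c - r ^ 2) ^ 2 = c - r ^ 2 := Real.sq_sqrt hτ0
  set τ := Real.sqrt (c - r ^ 2)
  have hτ1 : |τ - 1| ≤ 2 * ε := by
    apply abs_sub_one_le (Real.sqrt_nonneg _)
    rw [hτ, abs_le]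
    constructor <;> nlinarith [sq_nonneg r]
  have hl := law2 x y a r τ ha har (by rw [hτ]; ring)
  have m1 : AEMeasurable (fun w : Fin m → ℝ => (∑ i, w i * x i, ∑ i, w i * y i))
    (gaussianVec m) := by fun_prop
  have m2 : AEMeasurable (fun p : ℝ × ℝ => (a * p.1, r * p.1 + τ * p.2))
    (stdGaussian.prod stdGaussian) := by fun_prop
  have hF : Continuous (fun q : ℝ × ℝ => σ q.1 * σ q.2) := by fun_prop
  have e1 := integral_map m1 (f := fun q : ℝ × ℝ => σ q.1 * σ q.2) hF.aestronglyMeasurable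
  have e2 := integral_map m2 (f := fun q : ℝ × ℝ => σ q.1 * σ q.2) hF.aestronglyMeasurable
  rw [hl, e2] at e1
  rw [← e1, ← har]
  have := H a r τ (2 * ε) ((abs_sub_one_le ha0 hx).trans (by linarith)) hτ1 hr1 (by linarith)
  refine this.trans (le_of_eq (by ring))

lemma vexp (h : Act σ σ' lam) : ∃ t M : ℝ, 0 < t ∧ ∀ (m : ℕ) (x : Fin m → ℝ),
    |∑ i, x i ^ 2 - 1| ≤ 1 →
    Integrable (fun w => Real.exp (2 * t * σ (∑ i, w i * x i) ^ 2)) (gaussianVec m) ∧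
    ∫ w, Real.exp (2 * t * σ (∑ i, w i * x i) ^ 2) ∂gaussianVec m ≤ M := by
  obtain ⟨t, M, ht, H⟩ := h.expb
  have hc := h.cont
  refine ⟨t, M, ht, fun m x hx => ?_⟩
  have ha : Real.sqrt (∑ i, x i ^ 2) ^ 2 = ∑ i, x i ^ 2 :=
    Real.sq_sqrt (Finset.sum_nonneg fun i _ => sq_nonneg _)
  have ha2 : |Real.sqrt (∑ i, x i ^ 2) - 1| ≤ 1 :=
    abs_sub_one_le (Real.sqrt_nonneg _) (by rwa [ha])
  have ha3 := abs_le.1 ha2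
  obtain ⟨v1, v2⟩ := vint (fun z => Real.exp (2 * t * σ z ^ 2)) (by fun_prop) x _ ha
  obtain ⟨h1, h2⟩ := H (Real.sqrt (∑ i, x i ^ 2)) (abs_le.2 ⟨by linarith, by linarith⟩)
  exact ⟨v2 h1, v1.trans_le h2⟩

lemma vconc (h : Act σ σ' lam) : ∃ t K : ℝ, 0 < t ∧ ∀ (m : ℕ) (x y : Fin m → ℝ),
    |∑ i, x i ^ 2 - 1| ≤ 1 → |∑ i, y i ^ 2 - 1| ≤ 1 → ∀ (d : ℕ), 0 < d →
    (Real.sqrt d)⁻¹ ≤ t → ∀ u : ℝ,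
    gaussianMat d m {W | u * Real.sqrt d ≤
      |∑ k, (σ (∑ i, W k i * x i) * σ (∑ i, W k i * y i) -
        ∫ w, σ (∑ i, w i * x i) * σ (∑ i, w i * y i) ∂gaussianVec m)|} ≤
    ENNReal.ofReal (K * Real.exp (-u)) := by
  obtain ⟨t, M, ht, H⟩ := h.vexp
  have hc := h.cont
  refine ⟨t, 2 * Real.exp (2 / t ^ 2 * (Real.exp (2 * t * (M / (2 * t))) * M)), ht,
    fun m x y hx hy d hd hdt u => ?_⟩
  obtain ⟨ix, bx⟩ := H m x hx
  obtain ⟨iy, bY⟩ := H m y hy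
  set Φ := ∫ w, σ (∑ i, w i * x i) * σ (∑ i, w i * y i) ∂gaussianVec m with hΦ
  have prodle : ∀ p q : ℝ, |p * q| ≤ (p ^ 2 + q ^ 2) / 2 := fun p q => by
    rw [abs_mul, ← sq_abs p, ← sq_abs q]; nlinarith [sq_nonneg (|p| - |q|)]
  have sqle : ∀ p : ℝ, p ^ 2 ≤ Real.exp (2 * t * p ^ 2) / (2 * t) := fun p => by
    rw [le_div_iff₀ (by positivity)]
    have := Real.add_one_le_exp (2 * t * p ^ 2)
    linarith
  set G : (Fin m → ℝ) → ℝ := fun w => (1 / 2) * (Real.exp (2 * t * σ (∑ i, w i * x i) ^ 2) +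
    Real.exp (2 * t * σ (∑ i, w i * y i) ^ 2)) with hG
  have iG : Integrable G (gaussianVec m) := (ix.add iy).const_mul _
  have bG : ∫ w, G w ∂gaussianVec m ≤ M := by
    rw [hG, integral_const_mul, integral_add ix iy]; linarith
  have pb : ∀ w : Fin m → ℝ, ‖σ (∑ i, w i * x i) * σ (∑ i, w i * y i)‖ ≤ 1 / (2 * t) * G w := by
    intro w
    refine (prodle _ _).trans ?_
    have h1 := sqle (σ (∑ i, w i * x i))
    have h2 := sqle (σ (∑ i, w i * y i))
    calc _ ≤ (Real.exp (2 * t * σ (∑ i, w i * x i) ^ 2) / (2 * t) +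
          Real.exp (2 * t * σ (∑ i, w i * y i) ^ 2) / (2 * t)) / 2 := by gcongr
      _ = _ := by simp only [hG]; ring
  have ip : Integrable (fun w => σ (∑ i, w i * x i) * σ (∑ i, w i * y i)) (gaussianVec m) :=
    (iG.const_mul _).mono' (Continuous.aestronglyMeasurable (by fun_prop)) (Eventually.of_forall pb)
  have bΦ : |Φ| ≤ M / (2 * t) := by
    have := norm_integral_le_of_norm_le (iG.const_mul (1 / (2 * t))) (Eventually.of_forall pb)
    rw [integral_const_mul] at this
    refine this.trans ?_
    calc _ ≤ 1 / (2 * t) * M := by gcongr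
      _ = _ := by ring
  have key : ∀ w : Fin m → ℝ, Real.exp (2 * t * |σ (∑ i, w i * x i) * σ (∑ i, w i * y i) - Φ|) ≤
      Real.exp (2 * t * (M / (2 * t))) * G w := by
    intro w
    set p := σ (∑ i, w i * x i)
    set q := σ (∑ i, w i * y i)
    have h1 : |p * q - Φ| ≤ M / (2 * t) + (p ^ 2 + q ^ 2) / 2 := by
      have h2 := abs_sub (p * q) Φ
      have h3 := prodle p q
      linarith
    have h2 : Real.exp (t * p ^ 2 + t * q ^ 2) ≤
        1 / 2 * (Real.exp (2 * t * p ^ 2) + Real.exp (2 * t * q ^ 2)) := by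
      have e1 : Real.exp (2 * t * p ^ 2) = Real.exp (t * p ^ 2) ^ 2 := by
        rw [← Real.exp_nat_mul]; congr 1; push_cast; ring
      have e2 : Real.exp (2 * t * q ^ 2) = Real.exp (t * q ^ 2) ^ 2 := by
        rw [← Real.exp_nat_mul]; congr 1; push_cast; ring
      rw [e1, e2, Real.exp_add]
      nlinarith [sq_nonneg (Real.exp (t * p ^ 2) - Real.exp (t * q ^ 2))]
    calc _ ≤ Real.exp (2 * t * (M / (2 * t)) + (t * p ^ 2 + t * q ^ 2)) := by
          apply Real.exp_le_exp.2
          have : 2 * t * |p * q - Φ| ≤ 2 * t * (M / (2 * t) + (p ^ 2 + q ^ 2) / 2) := by gcongr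
          linarith
      _ = _ := Real.exp_add _ _
      _ ≤ _ := by gcongr
  have iE : Integrable (fun w => Real.exp (2 * t *
      |σ (∑ i, w i * x i) * σ (∑ i, w i * y i) - Φ|)) (gaussianVec m) :=
    (iG.const_mul _).mono' (Continuous.aestronglyMeasurable (by fun_prop))
      (Eventually.of_forall fun w => by rw [Real.norm_eq_abs, Real.abs_exp]; exact key w)
  refine conc (gaussianVec m) (fun w => σ (∑ i, w i * x i) * σ (∑ i, w i * y i) - Φ)
    (Continuous.measurable (by fun_prop)) t _ ht ?_ iE ?_ d hd hdt u
  · rw [integral_sub ip (integrable_const _)]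
    simp [hΦ]
  · calc _ ≤ ∫ w, Real.exp (2 * t * (M / (2 * t))) * G w ∂gaussianVec m :=
          integral_mono iE (iG.const_mul _) key
      _ = Real.exp (2 * t * (M / (2 * t))) * ∫ w, G w ∂gaussianVec m := integral_const_mul _ _
      _ ≤ _ := by gcongr

end Act

/-- entrywise closeness of the Gram matrix to the identity -/
def Near {m n : ℕ} (ε : ℝ) (X : Matrix (Fin m) (Fin n) ℝ) : Prop :=
  ∀ α β : Fin n, |∑ i, X i α * X i β - (1 : Matrix (Fin n) (Fin n) ℝ) α β| ≤ ε

lemma Near.diag {m n : ℕ} {ε : ℝ} {X : Matrix (Fin m) (Fin n) ℝ} (h : Near ε X) (α : Fin n) :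
    |∑ i, X i α ^ 2 - 1| ≤ ε := by
  have := h α α
  simpa [sq] using this

lemma Near.off {m n : ℕ} {ε : ℝ} {X : Matrix (Fin m) (Fin n) ℝ} (h : Near ε X) (α β : Fin n)
    (hab : α ≠ β) : |∑ i, X i α * X i β| ≤ ε := by
  have := h α β
  simpa [Matrix.one_apply_ne hab] using this

lemma IsOrthonormal.near {m n : ℕ} {ε B : ℝ} {X : Matrix (Fin m) (Fin n) ℝ}
    (h : IsOrthonormal ε B X) : Near ε X := by
  intro α β
  by_cases hab : α = β
  · subst hab
    simpa [sq] using h.1 α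
  · simpa [Matrix.one_apply_ne hab] using h.2.1 α β hab

lemma Near.mono {m n : ℕ} {ε ε' : ℝ} {X : Matrix (Fin m) (Fin n) ℝ} (h : Near ε X) (hε : ε ≤ ε') :
    Near ε' X := fun α β => (h α β).trans hε

/-- one layer -/
noncomputable def lay (σ : ℝ → ℝ) {d m n : ℕ} (W : Fin d → Fin m → ℝ)
    (X : Matrix (Fin m) (Fin n) ℝ) : Matrix (Fin d) (Fin n) ℝ :=
  (Real.sqrt d)⁻¹ • ((Matrix.of W * X).map σ)

lemma lay_apply (σ : ℝ → ℝ) {d m n : ℕ} (W : Fin d → Fin m → ℝ)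
    (X : Matrix (Fin m) (Fin n) ℝ) (k : Fin d) (α : Fin n) :
    lay σ W X k α = (Real.sqrt d)⁻¹ * σ (∑ i, W k i * X i α) := by
  simp [lay, Matrix.mul_apply]

lemma step {σ σ' : ℝ → ℝ} {lam : ℝ} (h : Act σ σ' lam) : ∃ t K C : ℝ, 0 < t ∧ 0 ≤ C ∧
    ∀ (m n : ℕ) (X : Matrix (Fin m) (Fin n) ℝ) (ε : ℝ), 0 ≤ ε → ε ≤ 1 / 2 → Near ε X →
    ∀ (d : ℕ), 0 < d → (Real.sqrt d)⁻¹ ≤ t → ∀ u : ℝ,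
    gaussianMat d m {W | ¬ Near (C * ε + u / Real.sqrt d) (lay σ W X)} ≤
      (n ^ 2 : ℕ) * ENNReal.ofReal (K * Real.exp (-u)) := by
  obtain ⟨t, K, ht, H⟩ := h.vconc
  obtain ⟨C1, hC1, D⟩ := h.vdiag
  obtain ⟨C2, hC2, O⟩ := h.voff
  set b := ∫ x, σ' x ∂stdGaussian
  refine ⟨t, K, C1 + (b ^ 2 + C2), ht, by positivity, ?_⟩
  intro m n X ε he hε hX d hd hdt u
  have hs : 0 < Real.sqrt d := Real.sqrt_pos.2 (by exact_mod_cast hd)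
  have hss : Real.sqrt d * Real.sqrt d = d := Real.mul_self_sqrt (by positivity)
  have hdi : (d : ℝ)⁻¹ = (Real.sqrt d)⁻¹ * (Real.sqrt d)⁻¹ := by rw [← mul_inv, hss]
  set Φ : Fin n → Fin n → ℝ := fun α β =>
    ∫ w, σ (∑ i, w i * X i α) * σ (∑ i, w i * X i β) ∂gaussianVec m with hΦ
  have hΦb : ∀ α β, |Φ α β - (1 : Matrix (Fin n) (Fin n) ℝ) α β| ≤ (C1 + (b ^ 2 + C2)) * ε := by
    intro α β
    by_cases hab : α = β
    · subst hab
      rw [Matrix.one_apply_eq]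
      refine (D m (fun i => X i α) ε (hX.diag α) (by linarith)).trans ?_
      gcongr
      have : 0 ≤ b ^ 2 + C2 := by positivity
      linarith
    · rw [Matrix.one_apply_ne hab, sub_zero]
      have h1 := O m (fun i => X i α) (fun i => X i β) ε (hX.diag α) (hX.diag β) (hX.off α β hab) hε
      have h2 : |b ^ 2 * ∑ i, X i α * X i β| ≤ b ^ 2 * ε := by
        rw [abs_mul, abs_of_nonneg (sq_nonneg b)]
        exact mul_le_mul_of_nonneg_left (hX.off α β hab) (sq_nonneg _)
      have h3 : C2 * ε ^ 2 ≤ C2 * ε := by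
        gcongr; nlinarith
      have h4 : 0 ≤ C1 * ε := by positivity
      have h5 := abs_add_le (Φ α β - b ^ 2 * ∑ i, X i α * X i β) (b ^ 2 * ∑ i, X i α * X i β)
      rw [sub_add_cancel] at h5
      calc |Φ α β| ≤ _ := h5
        _ ≤ C2 * ε ^ 2 + b ^ 2 * ε := add_le_add h1 h2
        _ ≤ _ := by linarith
  set T : Fin n × Fin n → Set (Fin d → Fin m → ℝ) := fun q => {W | u * Real.sqrt d ≤
      |∑ k, (σ (∑ i, W k i * X i q.1) * σ (∑ i, W k i * X i q.2) - Φ q.1 q.2)|} with hT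
  have hsub : {W | ¬ Near ((C1 + (b ^ 2 + C2)) * ε + u / Real.sqrt d) (lay σ W X)} ⊆ ⋃ q, T q := by
    intro W hW
    simp only [Near, not_forall, not_le, Set.mem_ofPred_eq] at hW
    obtain ⟨α, β, hW⟩ := hW
    rw [Set.mem_iUnion]
    refine ⟨(α, β), ?_⟩
    simp only [hT, Set.mem_ofPred_eq]
    have e1 : ∑ k, lay σ W X k α * lay σ W X k β =
        (d : ℝ)⁻¹ * ∑ k, σ (∑ i, W k i * X i α) * σ (∑ i, W k i * X i β) := by
      rw [Finset.mul_sum]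
      refine Finset.sum_congr rfl fun k _ => ?_
      rw [lay_apply, lay_apply, hdi]; ring
    have hdpos : (0 : ℝ) < d := by exact_mod_cast hd
    rw [Finset.sum_sub_distrib]
    simp only [Finset.sum_const, Finset.card_univ, Fintype.card_fin, nsmul_eq_mul]
    set S := ∑ k, σ (∑ i, W k i * X i α) * σ (∑ i, W k i * X i β)
    rw [e1] at hW
    have h6 := hΦb α β
    have h7 := abs_add_le ((d : ℝ)⁻¹ * S - Φ α β) (Φ α β - (1 : Matrix (Fin n) (Fin n) ℝ) α β)
    rw [sub_add_sub_cancel] at h7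
    have h8 : u / Real.sqrt d ≤ |(d : ℝ)⁻¹ * S - Φ α β| := by linarith
    have h9 : S - d * Φ α β = d * ((d : ℝ)⁻¹ * S - Φ α β) := by field_simp
    rw [h9, abs_mul, abs_of_pos hdpos]
    calc u * Real.sqrt d = d * (u / Real.sqrt d) := by
          rw [mul_div_assoc', eq_div_iff hs.ne', mul_assoc, hss, mul_comm]
      _ ≤ _ := by gcongr
  calc _ ≤ gaussianMat d m (⋃ q, T q) := measure_mono hsub
    _ ≤ ∑ q, gaussianMat d m (T q) := measure_iUnion_fintype_le _ _
    _ ≤ ∑ _q : Fin n × Fin n, ENNReal.ofReal (K * Real.exp (-u)) := by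
        refine Finset.sum_le_sum fun q _ => ?_
        exact H m (fun i => X i q.1) (fun i => X i q.2) ((hX.diag _).trans (by linarith))
          ((hX.diag _).trans (by linarith)) d hd hdt u
    _ = _ := by simp [sq]

lemma netLayer_congr (σ : ℝ → ℝ) (d : ℕ → ℕ) (n : ℕ)
    (W W' : (ℓ : ℕ) → Fin (d (ℓ + 1)) → Fin (d ℓ) → ℝ)
    (X0 : Matrix (Fin (d 0)) (Fin n) ℝ) : ∀ ℓ, (∀ m < ℓ, W m = W' m) →
    netLayer σ d n W X0 ℓ = netLayer σ d n W' X0 ℓ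
  | 0, _ => rfl
  | ℓ + 1, h => by
    rw [netLayer, netLayer, netLayer_congr σ d n W W' X0 ℓ (fun m hm => h m (by omega)),
      h ℓ (by omega)]

/-- extend a finite tuple of weights by zero -/
def extW {d : ℕ → ℕ} {L : ℕ} (V : (ℓ : Fin L) → Fin (d ((ℓ : ℕ) + 1)) → Fin (d (ℓ : ℕ)) → ℝ)
    (m : ℕ) : Fin (d (m + 1)) → Fin (d m) → ℝ :=
  if h : m < L then V ⟨m, h⟩ else fun _ _ => 0

lemma extW_meas {d : ℕ → ℕ} {L : ℕ} (m : ℕ) (k : Fin (d (m + 1))) (i : Fin (d m)) :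
    Measurable (fun V : (ℓ : Fin L) → Fin (d ((ℓ : ℕ) + 1)) → Fin (d (ℓ : ℕ)) → ℝ =>
      extW V m k i) := by
  unfold extW
  by_cases h : m < L
  · simp only [h, dif_pos]
    exact (measurable_pi_apply i).comp ((measurable_pi_apply k).comp
      (measurable_pi_apply (⟨m, h⟩ : Fin L)))
  · simp only [h, dif_neg, not_false_eq_true]
    exact measurable_const

lemma netLayer_meas (σ : ℝ → ℝ) (hσ : Measurable σ) (d : ℕ → ℕ) (n L : ℕ)
    (X0 : Matrix (Fin (d 0)) (Fin n) ℝ) : ∀ ℓ (k : Fin (d ℓ)) (α : Fin n), Measurable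
    (fun V : (ℓ : Fin L) → Fin (d ((ℓ : ℕ) + 1)) → Fin (d (ℓ : ℕ)) → ℝ =>
      netLayer σ d n (extW V) X0 ℓ k α)
  | 0, k, α => measurable_const
  | ℓ + 1, k, α => by
    have e : ∀ V : (ℓ : Fin L) → Fin (d ((ℓ : ℕ) + 1)) → Fin (d (ℓ : ℕ)) → ℝ,
        netLayer σ d n (extW V) X0 (ℓ + 1) k α = (Real.sqrt (d (ℓ + 1)))⁻¹ *
          σ (∑ i, extW V ℓ k i * netLayer σ d n (extW V) X0 ℓ i α) := fun V =>
      lay_apply σ (extW V ℓ) _ k α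
    simp only [e]
    refine (hσ.comp ?_).const_mul _
    exact Finset.measurable_sum _ fun i _ =>
      (extW_meas ℓ k i).mul (netLayer_meas σ hσ d n L X0 ℓ i α)

lemma near_meas {Ω : Type*} [MeasurableSpace Ω] {m n : ℕ} (ε : ℝ)
    (X : Ω → Matrix (Fin m) (Fin n) ℝ) (h : ∀ i α, Measurable fun ω => X ω i α) :
    MeasurableSet {ω | Near ε (X ω)} := by
  unfold Near
  simp only [Set.ofPred_forall]
  refine MeasurableSet.iInter fun α => MeasurableSet.iInter fun β => ?_
  have : Measurable fun ω => |∑ i, X ω i α * X ω i β - (1 : Matrix (Fin n) (Fin n) ℝ) α β| := by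
    have h1 : Measurable fun ω => ∑ i, X ω i α * X ω i β :=
      Finset.measurable_sum _ fun i _ => (h i α).mul (h i β)
    exact continuous_abs.measurable.comp (h1.sub_const _)
  exact measurableSet_le this measurable_const

lemma prob_step {σ σ' : ℝ → ℝ} {lam : ℝ} (h : Act σ σ' lam) : ∃ t K C : ℝ, 0 < t ∧ 0 ≤ C ∧
    ∀ (d : ℕ → ℕ) (n L ℓ : ℕ) (_ : ℓ < L) (Ω : Type _) [MeasurableSpace Ω] (Pr : Measure Ω)
    [IsProbabilityMeasure Pr]
    (W : (ℓ : ℕ) → Ω → Fin (d (ℓ + 1)) → Fin (d ℓ) → ℝ)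
    (_ : Measure.map (fun ω => fun ℓ : Fin L => W ℓ ω) Pr =
      Measure.pi (fun ℓ : Fin L => gaussianMat (d ((ℓ : ℕ) + 1)) (d (ℓ : ℕ))))
    (X0 : Matrix (Fin (d 0)) (Fin n) ℝ) (ε : ℝ), 0 ≤ ε → ε ≤ 1 / 2 →
    0 < d (ℓ + 1) → (Real.sqrt (d (ℓ + 1)))⁻¹ ≤ t → ∀ u : ℝ,
    Pr {ω | Near ε (netLayer σ d n (fun m => W m ω) X0 ℓ) ∧
      ¬ Near (C * ε + u / Real.sqrt (d (ℓ + 1))) (netLayer σ d n (fun m => W m ω) X0 (ℓ + 1))} ≤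
      (n ^ 2 : ℕ) * ENNReal.ofReal (K * Real.exp (-u)) := by
  obtain ⟨t, K, C, ht, hC, H⟩ := step h
  refine ⟨t, K, C, ht, hC, ?_⟩
  intro d n L ℓ hℓ Ω _ Pr _ W hW X0 ε he hε hd hdt u
  have hae : AEMeasurable (fun ω => fun ℓ : Fin L => W ℓ ω) Pr := by
    by_contra hne
    rw [Measure.map_of_not_aemeasurable hne] at hW
    have := congrArg (fun μ => μ Set.univ) hW
    simp at this
  set S : Set ((ℓ : Fin L) → Fin (d ((ℓ : ℕ) + 1)) → Fin (d (ℓ : ℕ)) → ℝ) :=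
    {V | Near ε (netLayer σ d n (extW V) X0 ℓ)} ∩
    {V | Near (C * ε + u / Real.sqrt (d (ℓ + 1))) (netLayer σ d n (extW V) X0 (ℓ + 1))}ᶜ with hS
  have mS : MeasurableSet S :=
    (near_meas _ _ (netLayer_meas σ h.cont.measurable d n L X0 ℓ)).inter
      (near_meas _ _ (netLayer_meas σ h.cont.measurable d n L X0 (ℓ + 1))).compl
  have cong : ∀ ω, ∀ j ≤ L, netLayer σ d n (extW fun ℓ : Fin L => W ℓ ω) X0 j =
      netLayer σ d n (fun m => W m ω) X0 j := by
    intro ω j hj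
    apply netLayer_congr
    intro m hm
    simp [extW, show m < L by omega]
  have e1 : {ω | Near ε (netLayer σ d n (fun m => W m ω) X0 ℓ) ∧
      ¬ Near (C * ε + u / Real.sqrt (d (ℓ + 1))) (netLayer σ d n (fun m => W m ω) X0 (ℓ + 1))} =
      (fun ω => fun ℓ : Fin L => W ℓ ω) ⁻¹' S := by
    ext ω
    simp only [hS, Set.mem_ofPred_eq, Set.mem_preimage, Set.mem_inter_iff, Set.mem_compl_iff,
      cong ω ℓ (by omega), cong ω (ℓ + 1) (by omega)]
  rw [e1, ← Measure.map_apply_of_aemeasurable hae mS, hW]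
  refine slice_bound _ S mS ⟨ℓ, hℓ⟩ _ fun V => ?_
  have c1 : ∀ y, netLayer σ d n (extW (Function.update V ⟨ℓ, hℓ⟩ y)) X0 ℓ =
      netLayer σ d n (extW V) X0 ℓ := by
    intro y
    apply netLayer_congr
    intro m hm
    have hm' : m < L := by omega
    have : (⟨m, hm'⟩ : Fin L) ≠ ⟨ℓ, hℓ⟩ := by simp; omega
    simp [extW, hm', Function.update_of_ne this]
  have c2 : ∀ y, netLayer σ d n (extW (Function.update V ⟨ℓ, hℓ⟩ y)) X0 (ℓ + 1) =
      lay σ y (netLayer σ d n (extW V) X0 ℓ) := by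
    intro y
    rw [netLayer, c1 y, lay]
    simp [extW, hℓ]
  by_cases hN : Near ε (netLayer σ d n (extW V) X0 ℓ)
  · refine le_trans (measure_mono ?_) (H (d ℓ) n _ ε he hε hN (d (ℓ + 1)) hd hdt u)
    intro y hy
    simp only [hS, Set.mem_ofPred_eq, Set.mem_inter_iff, Set.mem_compl_iff] at hy ⊢
    rw [← c2 y]
    exact hy.2
  · have : {y | Function.update V ⟨ℓ, hℓ⟩ y ∈ S} = ∅ := by
      ext y
      simp only [hS, Set.mem_ofPred_eq, Set.mem_inter_iff, c1 y, hN, false_and,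
        Set.mem_empty_iff_false]
    rw [this]; simp

lemma eps_small (ε : ℕ → ℝ) (h0 : ∀ n, 0 ≤ ε n)
    (hε : Tendsto (fun n : ℕ => ε n * (n : ℝ) ^ ((1 : ℝ) / 4)) atTop (𝓝 0)) :
    ∀ᶠ n in atTop, ε n ≤ 1 / 2 := by
  filter_upwards [hε.eventually_le_const (show (0 : ℝ) < 1 / 2 by norm_num),
    eventually_ge_atTop 1] with n h1 h2
  have : (1 : ℝ) ≤ (n : ℝ) ^ ((1 : ℝ) / 4) :=
    Real.one_le_rpow (by exact_mod_cast h2) (by norm_num)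
  nlinarith [h0 n]

lemma dim_facts (d : ℕ → ℕ) (γ : ℝ) (hγ : 0 < γ)
    (hd : Tendsto (fun n : ℕ => (n : ℝ) / (d n : ℝ)) atTop (𝓝 γ)) :
    (∀ᶠ n in atTop, 0 < d n) ∧ Tendsto (fun n => (Real.sqrt (d n))⁻¹) atTop (𝓝 0) ∧
    Tendsto (fun n : ℕ => 4 * Real.log n / Real.sqrt (d n) * (n : ℝ) ^ ((1 : ℝ) / 4))
      atTop (𝓝 0) := by
  have hs := (Real.continuous_sqrt.tendsto γ).comp hd
  refine ⟨?_, ?_, ?_⟩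
  · filter_upwards [hd.eventually_const_lt hγ] with n hn
    by_contra h
    have : d n = 0 := by omega
    simp [this] at hn
  · have h1 : Tendsto (fun n : ℕ => (Real.sqrt n)⁻¹) atTop (𝓝 0) :=
      tendsto_inv_atTop_zero.comp (Real.tendsto_sqrt_atTop.comp tendsto_natCast_atTop_atTop)
    have h2 := hs.mul h1
    rw [mul_zero] at h2
    refine h2.congr' ?_
    filter_upwards [eventually_ge_atTop 1] with n hn
    have : 0 < Real.sqrt n := Real.sqrt_pos.2 (by exact_mod_cast hn)
    simp only [Function.comp]
    rw [Real.sqrt_div (by positivity)]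
    field_simp
  · have h1 : Tendsto (fun n : ℕ => Real.log n / (n : ℝ) ^ ((1 : ℝ) / 4)) atTop (𝓝 0) :=
      ((isLittleO_log_rpow_atTop (show (0 : ℝ) < 1 / 4 by norm_num)).tendsto_div_nhds_zero).comp
        tendsto_natCast_atTop_atTop
    have h2 := (hs.mul h1).const_mul 4
    rw [mul_zero, mul_zero] at h2
    refine h2.congr' ?_
    filter_upwards [eventually_ge_atTop 1] with n hn
    have hn' : (0 : ℝ) < n := by exact_mod_cast hn
    have h3 : 0 < (n : ℝ) ^ ((1 : ℝ) / 4) := Real.rpow_pos_of_pos hn' _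
    have h4 : Real.sqrt n = (n : ℝ) ^ ((1 : ℝ) / 4) * (n : ℝ) ^ ((1 : ℝ) / 4) := by
      rw [← Real.rpow_add hn', Real.sqrt_eq_rpow]; norm_num
    simp only [Function.comp]
    rw [Real.sqrt_div (by positivity), h4]
    field_simp

lemma sum_fin (K : ℝ) :
    ∑' n : ℕ, ((n ^ 2 : ℕ) : ENNReal) * ENNReal.ofReal (K * Real.exp (-(4 * Real.log n))) ≠ ⊤ := by
  have hsum : Summable (fun n : ℕ => |K| * (1 / (n : ℝ) ^ 2)) :=
    (Real.summable_one_div_nat_pow.2 (by norm_num)).mul_left _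
  refine ne_top_of_le_ne_top hsum.tsum_ofReal_ne_top (ENNReal.tsum_le_tsum fun n => ?_)
  rcases Nat.eq_zero_or_pos n with rfl | hn
  · simp
  have hn' : (0 : ℝ) < n := by exact_mod_cast hn
  have e : Real.exp (-(4 * Real.log n)) = 1 / (n : ℝ) ^ 4 := by
    rw [Real.exp_neg, show 4 * Real.log (n : ℝ) = ((4 : ℕ) : ℝ) * Real.log n by norm_num,
      Real.exp_nat_mul, Real.exp_log hn', one_div]
  rw [e, ← ENNReal.ofReal_natCast, ← ENNReal.ofReal_mul (by positivity)]
  apply ENNReal.ofReal_le_ofReal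
  have : ((n ^ 2 : ℕ) : ℝ) * (K * (1 / (n : ℝ) ^ 4)) = K * (1 / (n : ℝ) ^ 2) := by
    push_cast; field_simp
  rw [this]
  gcongr
  exact le_abs_self K

lemma layers_near {σ σ' : ℝ → ℝ} {lam : ℝ} (h : Act σ σ' lam) (L : ℕ) (d : ℕ → ℕ → ℕ)
    (Ω : Type*) [MeasurableSpace Ω] (Pr : Measure Ω) [IsProbabilityMeasure Pr]
    (W : (n : ℕ) → (ℓ : ℕ) → Ω → Fin (d n (ℓ + 1)) → Fin (d n ℓ) → ℝ)
    (hW : ∀ n : ℕ, Measure.map (fun ω => fun ℓ : Fin L => W n ℓ ω) Pr =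
      Measure.pi (fun ℓ : Fin L => gaussianMat (d n ((ℓ : ℕ) + 1)) (d n (ℓ : ℕ))))
    (X0 : (n : ℕ) → Matrix (Fin (d n 0)) (Fin n) ℝ)
    (ε : ℕ → ℝ) (B : ℝ)
    (hX0orth : ∀ n, IsOrthonormal (ε n) B (X0 n))
    (hε : Tendsto (fun n : ℕ => ε n * (n : ℝ) ^ ((1 : ℝ) / 4)) atTop (𝓝 0))
    (γ : ℕ → ℝ) (hγ : ∀ ℓ, 1 ≤ ℓ → ℓ ≤ L → 0 < γ ℓ)
    (hdim : ∀ ℓ, 1 ≤ ℓ → ℓ ≤ L →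
      Tendsto (fun n : ℕ => (n : ℝ) / (d n ℓ : ℝ)) atTop (𝓝 (γ ℓ))) :
    ∀ ℓ, ℓ ≤ L → ∃ e : ℕ → ℝ, (∀ n, 0 ≤ e n) ∧
      Tendsto (fun n : ℕ => e n * (n : ℝ) ^ ((1 : ℝ) / 4)) atTop (𝓝 0) ∧
      ∀ᵐ ω ∂Pr, ∀ᶠ n in atTop, Near (e n) (netLayer σ (d n) n (fun m => W n m ω) (X0 n) ℓ) := by
  obtain ⟨t, K, C, ht, hC, H⟩ := prob_step h
  intro ℓ
  induction ℓ with
  | zero =>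
    intro _
    refine ⟨fun n => |ε n|, fun n => abs_nonneg _, ?_, ?_⟩
    · have := hε.abs
      rw [abs_zero] at this
      refine this.congr fun n => ?_
      rw [abs_mul, abs_of_nonneg (Real.rpow_nonneg (Nat.cast_nonneg n) _)]
    · exact Eventually.of_forall fun ω => Eventually.of_forall fun n =>
        (hX0orth n).near.mono (le_abs_self _)
  | succ ℓ ih =>
    intro hℓ
    obtain ⟨e, he0, he, hN⟩ := ih (by omega)
    obtain ⟨f1, f2, f3⟩ := dim_facts (fun n => d n (ℓ + 1)) (γ (ℓ + 1))
      (hγ _ (by omega) hℓ) (hdim _ (by omega) hℓ)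
    refine ⟨fun n => C * e n + 4 * Real.log n / Real.sqrt (d n (ℓ + 1)), ?_, ?_, ?_⟩
    · intro n
      have := he0 n
      have := Real.log_natCast_nonneg n
      positivity
    · have := (he.const_mul C).add f3
      rw [mul_zero, zero_add] at this
      refine this.congr fun n => ?_
      ring
    · set s : ℕ → Set Ω := fun n => {ω | (e n ≤ 1 / 2 ∧ 0 < d n (ℓ + 1) ∧
        (Real.sqrt (d n (ℓ + 1)))⁻¹ ≤ t) ∧
        (Near (e n) (netLayer σ (d n) n (fun m => W n m ω) (X0 n) ℓ) ∧
          ¬ Near (C * e n + 4 * Real.log n / Real.sqrt (d n (ℓ + 1)))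
            (netLayer σ (d n) n (fun m => W n m ω) (X0 n) (ℓ + 1)))} with hs
      have hb : ∀ n, Pr (s n) ≤
          ((n ^ 2 : ℕ) : ENNReal) * ENNReal.ofReal (K * Real.exp (-(4 * Real.log n))) := by
        intro n
        by_cases hc : e n ≤ 1 / 2 ∧ 0 < d n (ℓ + 1) ∧ (Real.sqrt (d n (ℓ + 1)))⁻¹ ≤ t
        · refine le_trans (measure_mono fun ω hω => ?_) (H (d n) n L ℓ (by omega) Ω Pr (W n) (hW n)
            (X0 n) (e n) (he0 n) hc.1 hc.2.1 hc.2.2 (4 * Real.log n))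
          exact hω.2
        · have : s n = ∅ := by
            ext ω
            simp only [hs, Set.mem_ofPred_eq, Set.mem_empty_iff_false, iff_false]
            exact fun hh => hc hh.1
          rw [this]; simp
      have hbc := ae_eventually_notMem (ne_top_of_le_ne_top (sum_fin K) (ENNReal.tsum_le_tsum hb))
      filter_upwards [hbc, hN] with ω h1 h2
      filter_upwards [h1, h2, eps_small e he0 he, f1, f2.eventually_le_const ht]
        with n g1 g2 g3 g4 g5
      by_contra hc
      exact g1 ⟨⟨g3, g4, g5⟩, g2, hc⟩

lemma frob_bound (n : ℕ) (hn : 1 ≤ n) (M : Matrix (Fin n) (Fin n) ℝ) (a b e : ℝ) (ha : 0 ≤ a)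
    (hb : 0 ≤ b) (he : 0 ≤ e)
    (h1 : ∀ α, |M α α| ≤ a * e) (h2 : ∀ α β, α ≠ β → |M α β| ≤ b * e ^ 2) :
    (n : ℝ)⁻¹ * frobSq M ≤ b ^ 2 * (e * (n : ℝ) ^ ((1 : ℝ) / 4)) ^ 4 +
      a ^ 2 * (e * (n : ℝ) ^ ((1 : ℝ) / 4)) ^ 2 := by
  have hn' : (1 : ℝ) ≤ n := by exact_mod_cast hn
  have hq : (1 : ℝ) ≤ (n : ℝ) ^ ((1 : ℝ) / 4) := Real.one_le_rpow hn' (by norm_num)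
  have hq4 : ((n : ℝ) ^ ((1 : ℝ) / 4)) ^ 4 = n := by
    rw [← Real.rpow_natCast, ← Real.rpow_mul (by positivity)]; norm_num
  have hen : ∀ α β, M α β ^ 2 ≤ b ^ 2 * e ^ 4 + if α = β then a ^ 2 * e ^ 2 else 0 := by
    intro α β
    by_cases hab : α = β
    · subst hab
      have := pow_le_pow_left₀ (abs_nonneg _) (h1 α) 2
      rw [sq_abs] at this
      have h3 : 0 ≤ b ^ 2 * e ^ 4 := by positivity
      simp only [if_true]
      nlinarith
    · have := pow_le_pow_left₀ (abs_nonneg _) (h2 α β hab) 2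
      rw [sq_abs] at this
      rw [if_neg hab]
      nlinarith
  have hf : frobSq M ≤ n * (n * (b ^ 2 * e ^ 4) + a ^ 2 * e ^ 2) := by
    unfold frobSq
    refine (Finset.sum_le_sum fun α _ => Finset.sum_le_sum fun β _ => hen α β).trans ?_
    simp [Finset.sum_add_distrib, mul_add]
  calc (n : ℝ)⁻¹ * frobSq M ≤ (n : ℝ)⁻¹ * (n * (n * (b ^ 2 * e ^ 4) + a ^ 2 * e ^ 2)) := by gcongr
    _ = n * (b ^ 2 * e ^ 4) + a ^ 2 * e ^ 2 := by
      rw [inv_mul_cancel_left₀]; positivity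
    _ ≤ _ := by
      rw [mul_pow, mul_pow, hq4]
      have : (1 : ℝ) ≤ ((n : ℝ) ^ ((1 : ℝ) / 4)) ^ 2 := one_le_pow₀ hq
      have h3 : 0 ≤ a ^ 2 * e ^ 2 := by positivity
      nlinarith

theorem phi_difference
    (L : ℕ) (hL : 1 ≤ L)
    (d : ℕ → ℕ → ℕ)
    (σ σ' σ'' : ℝ → ℝ) (lamσ : ℝ)
    (hderiv1 : ∀ x, HasDerivAt σ (σ' x) x)
    (hderiv2 : ∀ x, HasDerivAt σ' (σ'' x) x)
    (hσ'bdd : ∀ x, |σ' x| ≤ lamσ) (hσ''bdd : ∀ x, |σ'' x| ≤ lamσ)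
    (hmean : (∫ x, σ x ∂stdGaussian) = 0)
    (hvar : (∫ x, (σ x) ^ 2 ∂stdGaussian) = 1)
    (Ω : Type*) [MeasurableSpace Ω] (Pr : Measure Ω) [IsProbabilityMeasure Pr]
    (W : (n : ℕ) → (ℓ : ℕ) → Ω → Fin (d n (ℓ + 1)) → Fin (d n ℓ) → ℝ)
    (hW : ∀ n : ℕ, Measure.map (fun ω => fun ℓ : Fin L => W n ℓ ω) Pr =
      Measure.pi (fun ℓ : Fin L => gaussianMat (d n ((ℓ : ℕ) + 1)) (d n (ℓ : ℕ))))
    (X0 : (n : ℕ) → Matrix (Fin (d n 0)) (Fin n) ℝ)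
    (ε : ℕ → ℝ) (B : ℝ)
    (hX0orth : ∀ n, IsOrthonormal (ε n) B (X0 n))
    (hε : Tendsto (fun n : ℕ => ε n * (n : ℝ) ^ ((1 : ℝ) / 4)) atTop (𝓝 0))
    (γ : ℕ → ℝ) (hγ : ∀ ℓ, 1 ≤ ℓ → ℓ ≤ L → 0 < γ ℓ)
    (hdim : ∀ ℓ, 1 ≤ ℓ → ℓ ≤ L →
      Tendsto (fun n : ℕ => (n : ℝ) / (d n ℓ : ℝ)) atTop (𝓝 (γ ℓ))) :
    -- for each fixed layer index `ℓ + 1 ∈ {1,…,L}`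
    ∀ ℓ < L, ∀ᵐ ω ∂Pr,
      Tendsto
        (fun n : ℕ =>
          (n : ℝ)⁻¹ * frobSq
            ((Matrix.of fun α β : Fin n =>
                ∫ w, σ (∑ i, w i * netLayer σ (d n) n (fun m => W n m ω) (X0 n) ℓ i α) *
                  σ (∑ i, w i * netLayer σ (d n) n (fun m => W n m ω) (X0 n) ℓ i β)
                  ∂gaussianVec (d n ℓ)) -
              ((∫ x, σ' x ∂stdGaussian) ^ 2 •
                  ((netLayer σ (d n) n (fun m => W n m ω) (X0 n) ℓ)ᵀ *
                    netLayer σ (d n) n (fun m => W n m ω) (X0 n) ℓ) +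
                (1 - (∫ x, σ' x ∂stdGaussian) ^ 2) • (1 : Matrix (Fin n) (Fin n) ℝ))))
        atTop (𝓝 0) := by
  have h : Act σ σ' lamσ :=
    ⟨hderiv1, hσ'bdd, fun x y => lip_of_deriv σ' σ'' lamσ hderiv2 hσ''bdd x y, hmean, hvar⟩
  obtain ⟨C1, hC1, D⟩ := h.vdiag
  obtain ⟨C2, hC2, O⟩ := h.voff
  intro ℓ hℓ
  obtain ⟨e, he0, he, hN⟩ := layers_near h L d Ω Pr W hW X0 ε B hX0orth hε γ hγ hdim ℓ hℓ.le
  set b := ∫ x, σ' x ∂stdGaussian with hbdef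
  filter_upwards [hN] with ω hω
  have hlim : Tendsto (fun n : ℕ => C2 ^ 2 * (e n * (n : ℝ) ^ ((1 : ℝ) / 4)) ^ 4 +
      (C1 + b ^ 2) ^ 2 * (e n * (n : ℝ) ^ ((1 : ℝ) / 4)) ^ 2) atTop (𝓝 0) := by
    have := ((he.pow 4).const_mul (C2 ^ 2)).add ((he.pow 2).const_mul ((C1 + b ^ 2) ^ 2))
    simpa using this
  refine tendsto_of_tendsto_of_tendsto_of_le_of_le' tendsto_const_nhds hlim ?_ ?_
  · refine Eventually.of_forall fun n => ?_
    have : ∀ M : Matrix (Fin n) (Fin n) ℝ, 0 ≤ frobSq M := fun M =>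
      Finset.sum_nonneg fun i _ => Finset.sum_nonneg fun j _ => sq_nonneg _
    exact mul_nonneg (by positivity) (this _)
  · filter_upwards [hω, eps_small e he0 he, eventually_ge_atTop 1] with n hX hs hn
    refine frob_bound n hn _ (C1 + b ^ 2) C2 (e n) (by positivity) hC2 (he0 n) ?_ ?_
    · intro α
      have h1 := D _ (fun i => netLayer σ (d n) n (fun m => W n m ω) (X0 n) ℓ i α) (e n)
        (hX.diag α) (by linarith)
      have h2 := hX α α
      rw [Matrix.one_apply_eq] at h2
      simp only [Matrix.sub_apply, Matrix.of_apply, Matrix.add_apply, Matrix.smul_apply,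
        Matrix.one_apply_eq, Matrix.mul_apply, Matrix.transpose_apply, smul_eq_mul]
      generalize (∑ i, netLayer σ (d n) n (fun m => W n m ω) (X0 n) ℓ i α *
        netLayer σ (d n) n (fun m => W n m ω) (X0 n) ℓ i α) = S at h2 ⊢
      generalize (∫ w, σ (∑ i, w i * netLayer σ (d n) n (fun m => W n m ω) (X0 n) ℓ i α) *
        σ (∑ i, w i * netLayer σ (d n) n (fun m => W n m ω) (X0 n) ℓ i α)
          ∂gaussianVec (d n ℓ)) = I at h1 ⊢
      have h3 : I - (b ^ 2 * S + (1 - b ^ 2) * 1) = (I - 1) - b ^ 2 * (S - 1) := by ring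
      rw [h3]
      refine (abs_sub _ _).trans ?_
      rw [abs_mul, abs_of_nonneg (sq_nonneg b)]
      have := mul_le_mul_of_nonneg_left h2 (sq_nonneg b)
      linarith
    · intro α β hab
      have h1 := O _ (fun i => netLayer σ (d n) n (fun m => W n m ω) (X0 n) ℓ i α)
        (fun i => netLayer σ (d n) n (fun m => W n m ω) (X0 n) ℓ i β) (e n)
        (hX.diag α) (hX.diag β) (hX.off α β hab) hs
      simpa [Matrix.mul_apply, Matrix.one_apply_ne hab] using h1
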